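/- Let P, Q be probability measures on (X, 𝓕) with P ≪ Q and g := dP/dQ square-integrable with respect to Q, let C > 0 and N ≥ 1, and suppose the mean squared error bound (∫_X g² dQ − 1)/N ≤ C holds. Then N ≥ C^{-1} (exp(D_KL(P‖Q)) − 1), where D_KL(P‖Q) := ∫_X g log g dQ. -/

import Mathlib

open MeasureTheory

/-!
The bound `D_KL ≤ log (1 + D_χ²)` is Jensen's inequality for `log` under `P`. Writing
`S = ∫ g² dQ`, it is obtained by integrating the tangent line inequality
`log t ≤ log S + t / S - 1` at `t = g`, weighted by `g`. Hence `exp D_KL - 1 ≤ S - 1`, and the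
hypothesis on the mean squared error says `S - 1 ≤ C N`.
-/

/-- The tangent line of `log` at `S`, multiplied by `t`; at `t = 0` both sides vanish. -/
theorem mul_log_le_tangent {t S : ℝ} (ht : 0 ≤ t) (hS : 0 < S) :
    t * Real.log t ≤ t * Real.log S + t ^ 2 / S - t := by
  rcases ht.eq_or_lt with rfl | ht
  · simp
  · have h := Real.log_le_sub_one_of_pos (div_pos ht hS)
    rw [Real.log_div ht.ne' hS.ne'] at h
    have h2 := mul_le_mul_of_nonneg_left h ht.le
    have h3 : t * (t / S) = t ^ 2 / S := by ring
    linarith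

/-- For a nonnegative square-integrable function the entropy integral converges, because
`-1 ≤ t log t ≤ t²` for `t ≥ 0`. -/
theorem integrable_mul_log_of_sq {X : Type*} [MeasurableSpace X] {Q : Measure X}
    [IsProbabilityMeasure Q] {g : X → ℝ} (hm : AEStronglyMeasurable g Q) (h0 : ∀ x, 0 ≤ g x)
    (hint : Integrable (fun x => g x ^ 2) Q) :
    Integrable (fun x => g x * Real.log (g x)) Q := by
  refine (hint.add (integrable_const (1 : ℝ))).mono'
    (Real.continuous_mul_log.comp_aestronglyMeasurable hm) (Filter.Eventually.of_forall fun x => ?_)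
  have ht := h0 x
  simp only [Pi.add_apply, Real.norm_eq_abs]
  rw [abs_le]
  constructor
  · have hlow : g x - 1 ≤ g x * Real.log (g x) := by
      rcases ht.eq_or_lt with h | h
      · simp [← h]
      · have h2 := mul_le_mul_of_nonneg_left (Real.one_sub_inv_le_log_of_pos h) h.le
        rwa [mul_sub, mul_one, mul_inv_cancel₀ h.ne'] at h2
    nlinarith [sq_nonneg (g x)]
  · have h := mul_log_le_tangent ht one_pos
    simp only [Real.log_one, mul_zero, div_one] at h
    linarith

/-- `exp D_KL ≤ 1 + D_χ²`, for a density `g` of a probability measure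
with respect to `Q`. -/
theorem exp_integral_mul_log_le {X : Type*} [MeasurableSpace X] {Q : Measure X}
    [IsProbabilityMeasure Q] {g : X → ℝ} (hg : Integrable g Q) (h0 : ∀ x, 0 ≤ g x)
    (h1 : ∫ x, g x ∂Q = 1) (hint : Integrable (fun x => g x ^ 2) Q) :
    Real.exp (∫ x, g x * Real.log (g x) ∂Q) ≤ ∫ x, g x ^ 2 ∂Q := by
  set S := ∫ x, g x ^ 2 ∂Q with hSdef
  -- `2 t - 1 ≤ t²` integrates to `1 ≤ S`, so that `log S` is not a junk value.
  have hS : 0 < S := by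
    have h : ∫ x, (2 * g x - 1) ∂Q ≤ S :=
      integral_mono ((hg.const_mul 2).sub (integrable_const 1)) hint
        fun x => by nlinarith [sq_nonneg (g x - 1)]
    rw [integral_sub (hg.const_mul 2) (integrable_const 1), integral_const_mul, h1] at h
    simp at h
    linarith
  rw [← Real.le_log_iff_exp_le hS]
  have hA := hg.mul_const (Real.log S)
  have hB := hint.div_const S
  have hAB : Integrable (fun x => g x * Real.log S + g x ^ 2 / S) Q := hA.add hB
  calc ∫ x, g x * Real.log (g x) ∂Q
      ≤ ∫ x, (g x * Real.log S + g x ^ 2 / S - g x) ∂Q :=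
        integral_mono (integrable_mul_log_of_sq hg.aestronglyMeasurable h0 hint)
          (hAB.sub hg) fun x => mul_log_le_tangent (h0 x) hS
    _ = Real.log S := by
        rw [integral_sub hAB hg, integral_add hA hB, integral_mul_const,
          integral_div, h1, ← hSdef, div_self hS.ne']
        ring

/-- If the mean squared error `(∫ g² dQ − 1)/N` of the importance sampling estimator of
`P(1)` is at most `C`, then `N ≥ C⁻¹ (exp(D_KL(P‖Q)) − 1)`,
where `D_KL(P‖Q) = ∫ g log g dQ`. -/
theorem necessary_sample_size_mse_KL {X : Type*} [MeasurableSpace X]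
    (P Q : Measure X) [IsProbabilityMeasure P] [IsProbabilityMeasure Q]
    (hPQ : P ≪ Q) (g : X → ℝ) (hg : g = fun x => (P.rnDeriv Q x).toReal)
    (hint : Integrable (fun x => g x ^ 2) Q)
    (C : ℝ) (hC : 0 < C) (N : ℕ) (hN : 1 ≤ N)
    (hmse : ((∫ x, g x ^ 2 ∂Q) - 1) / N ≤ C) :
    (N : ℝ) ≥ C⁻¹ * (Real.exp (∫ x, g x * Real.log (g x) ∂Q) - 1) := by
  have hgi : Integrable g Q := hg ▸ Measure.integrable_toReal_rnDeriv
  have h1 : ∫ x, g x ∂Q = 1 := by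
    rw [hg, Measure.integral_toReal_rnDeriv hPQ]
    simp
  have h0 : ∀ x, 0 ≤ g x := fun x => by rw [hg]; exact ENNReal.toReal_nonneg
  have hkey := exp_integral_mul_log_le hgi h0 h1 hint
  have hN' : (0 : ℝ) < N := by exact_mod_cast hN
  rw [div_le_iff₀ hN'] at hmse
  rw [ge_iff_le, inv_mul_le_iff₀ hC]
  linarith
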